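/- arXiv:1309.3223 — 2 statements merged into one kernel-verified Lean document; each statement's English description precedes it below -/
import Mathlib

section
/- Let G=(V,E) be a finite weighted graph, k ≥ 1 an integer with k+1 ≤ |V|, and 0 < ε < 1. Let A_1,…,A_k be pairwise disjoint nonempty subsets of V with (1+ε)·φ(A_i) ≤ ρ(k+1) for every i. Then for each 1 ≤ i ≤ k there exists a nonempty set B_i ⊆ A_i such that: (1) φ(B_i) ≤ φ(A_i), and (2) for every nonempty S ⊊ B_i, e(S,B_i)·vol(B_i) ≥ (ε/3)·vol(B_i∖S)·e(S,V∖B_i). -/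
open Finset

/-- Weighted degree of a vertex. -/
noncomputable def deg {V : Type*} [Fintype V] (w : V → V → ℝ) (v : V) : ℝ :=
  ∑ u, w v u

/-- Volume of a set of vertices. -/
noncomputable def vol {V : Type*} [Fintype V] (w : V → V → ℝ) (S : Finset V) : ℝ :=
  ∑ v ∈ S, deg w v

/-- Total weight of edges from `S` to `T \ S`. -/
noncomputable def eW {V : Type*} [DecidableEq V] (w : V → V → ℝ) (S T : Finset V) : ℝ :=
  ∑ u ∈ S, ∑ v ∈ T \ S, w u v

/-- Conductance of `S` in `G`. -/
noncomputable def phi {V : Type*} [Fintype V] [DecidableEq V] (w : V → V → ℝ)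
    (S : Finset V) : ℝ :=
  eW w S Finset.univ / vol w S

/-- Volume of `S ⊆ P` inside the induced subgraph `G[P]`. -/
noncomputable def volIn {V : Type*} [DecidableEq V] (w : V → V → ℝ) (P S : Finset V) : ℝ :=
  ∑ v ∈ S, ∑ u ∈ P, w v u

/-- `φ(G[P]) ≥ a` : every nonempty proper `S ⊊ P` with at most half of the induced volume
has induced conductance at least `a` (stated multiplicatively). -/
def inCondGE {V : Type*} [DecidableEq V] (w : V → V → ℝ) (P : Finset V) (a : ℝ) : Prop :=
  ∀ S : Finset V, S ⊆ P → S.Nonempty → S ≠ P →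
    volIn w P S ≤ volIn w P P / 2 → a * volIn w P S ≤ eW w S P

/-- `ρ(k)`: the minimum over families of `k` pairwise disjoint nonempty subsets of the
maximum conductance. -/
noncomputable def rho {V : Type*} [Fintype V] [DecidableEq V] (w : V → V → ℝ) (k : ℕ) : ℝ :=
  sInf { r | ∃ A : Fin k → Finset V, (∀ i, (A i).Nonempty) ∧
    (∀ i j, i ≠ j → Disjoint (A i) (A j)) ∧ r = ⨆ i, phi w (A i) }

/-- The normalized Laplacian `I - D^{-1/2} A D^{-1/2}`. -/
noncomputable def normLap {V : Type*} [Fintype V] [DecidableEq V] (w : V → V → ℝ) : Matrix V V ℝ :=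
  1 - Matrix.of fun u v => w u v / (Real.sqrt (deg w u) * Real.sqrt (deg w v))

/-- `lam w k` is the `k`-th smallest eigenvalue (1-indexed) of the normalized Laplacian. -/
noncomputable def lam {V : Type*} [Fintype V] [DecidableEq V] (w : V → V → ℝ) (k : ℕ) : ℝ :=
  if h : (normLap w).IsHermitian then
    ((Finset.univ.val.map h.eigenvalues).sort (· ≤ ·)).getD (k - 1) 0
  else 0

/-!
For each `i` let `B` minimize the conductance `p` among the nonempty subsets of `A i`. If `S` is a
nonempty proper subset of `B`, then `S` and `B \ S` have conductance at least `p`. Moreover,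
replacing `A i` by these two sets gives `k + 1` disjoint sets, so by the gap between `φ(A i)` and
`ρ(k + 1)` one of the two has conductance at least `(1 + ε) p`. The edges leaving `B` are split
between the boundaries of `S` and `B \ S`, whereas the edges between `S` and `B \ S` belong to both
boundaries; comparing with `p * vol B` bounds the weight of the latter edges from below, with the
constant `ε / (2 + ε)`, which is at least `ε / 3` when `ε < 1`.
-/

open Function

section Disjoint

variable {α : Type*} [PartialOrder α] [OrderBot α] {n : ℕ} {a : Fin n → α} {i : Fin n} {x y : α}

lemma pairwise_disjoint_update_of_le (ha : Pairwise (Disjoint on a)) (hy : y ≤ a i) :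
    Pairwise (Disjoint on update a i y) :=
  have hle : update a i y ≤ a := update_le_iff.2 ⟨hy, fun _ _ => le_rfl⟩
  ha.mono fun _ _ h => h.mono (hle _) (hle _)

lemma pairwise_disjoint_cons_update_of_le (ha : Pairwise (Disjoint on a)) (hx : x ≤ a i)
    (hy : y ≤ a i) (hxy : Disjoint x y) :
    Pairwise (Disjoint on (Fin.cons x (update a i y) : Fin (n + 1) → α)) := by
  have : Std.Symm (Disjoint on (Fin.cons x (update a i y) : Fin (n + 1) → α)) :=
    ⟨fun _ _ h => h.symm⟩
  refine pairwise_fin_succ_iff_of_isSymm.2 ⟨?_, pairwise_disjoint_update_of_le ha hy⟩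
  exact (forall_update_iff a fun _ z => Disjoint x z).2
    ⟨hxy, fun j hj => (ha hj.symm).mono_left hx⟩

end Disjoint

-- `a` and `b` stand for the parts of the boundary of `B` at `S` and at `B \ S`, `c` for
-- `e(S, B)`, `s` and `t` for the volumes of `S` and `B \ S`, and `p` for `φ(B)`.
lemma mul_mul_le_mul_of_boundary_gap {a b c s t p ε : ℝ} (hb : 0 ≤ b)
    (hc : 0 ≤ c) (hs : 0 ≤ s) (ht : 0 ≤ t) (hε : 0 ≤ ε) (hab : p * (s + t) = a + b)
    (hps : p * s ≤ c + a) (hpt : p * t ≤ c + b)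
    (hgap : (1 + ε) * p * s ≤ c + a ∨ (1 + ε) * p * t ≤ c + b) :
    ε * t * a ≤ (2 + ε) * c * (s + t) := by
  obtain hgap | hgap := hgap
  · have hac : a ≤ c + p * s := by linarith
    have hεa : ε * a ≤ (2 + ε) * c := by
      linarith [mul_le_mul_of_nonneg_left hac (by linarith : 0 ≤ 1 + ε)]
    calc ε * t * a = ε * a * t := by ring
      _ ≤ (2 + ε) * c * t := by gcongr
      _ ≤ (2 + ε) * c * (s + t) := by gcongr; linarith
  · have hεpt : ε * p * t ≤ 2 * c := by linarith
    calc ε * t * a ≤ ε * t * (p * (s + t)) := by gcongr; linarith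
      _ = ε * p * t * (s + t) := by ring
      _ ≤ 2 * c * (s + t) := by gcongr
      _ ≤ (2 + ε) * c * (s + t) := by gcongr; linarith

section Cut

variable {V : Type*} [DecidableEq V] {w : V → V → ℝ} {S B T : Finset V}

lemma eW_nonneg (hnonneg : ∀ u v, 0 ≤ w u v) (S T : Finset V) : 0 ≤ eW w S T :=
  sum_nonneg fun _ _ => sum_nonneg fun _ _ => hnonneg _ _

lemma eW_sdiff_self (hsym : ∀ u v, w u v = w v u) (hSB : S ⊆ B) :
    eW w (B \ S) B = eW w S B := by
  rw [eW, Finset.sdiff_sdiff_eq_self hSB, sum_comm]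
  exact sum_congr rfl fun u _ => sum_congr rfl fun v _ => hsym v u

lemma eW_add_eW_sdiff_right (hBT : B ⊆ T) :
    eW w S B + eW w S (T \ B) = eW w S T := by
  have hsplit : T \ S = (B \ S) ∪ ((T \ B) \ S) := by
    rw [← union_sdiff_distrib, union_sdiff_of_subset hBT]
  have hdisj : Disjoint (B \ S) ((T \ B) \ S) := disjoint_sdiff.mono sdiff_subset sdiff_subset
  simp only [eW, hsplit, sum_union hdisj, sum_add_distrib]

lemma eW_add_eW_sdiff_left (hSB : S ⊆ B) :
    eW w S (T \ B) + eW w (B \ S) (T \ B) = eW w B T := by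
  have hsdiff {R : Finset V} (hR : R ⊆ B) : (T \ B) \ R = T \ B :=
    sdiff_eq_self_of_disjoint (sdiff_disjoint.mono_right hR)
  simp only [eW, hsdiff hSB, hsdiff sdiff_subset]
  rw [add_comm, sum_sdiff hSB]

end Cut

section Conductance

variable {V : Type*} [Fintype V] {w : V → V → ℝ} {S B : Finset V}

lemma vol_pos (hdeg : ∀ v, 0 < deg w v) (hS : S.Nonempty) : 0 < vol w S :=
  sum_pos (fun v _ => hdeg v) hS

lemma vol_nonneg (hnonneg : ∀ u v, 0 ≤ w u v) (S : Finset V) : 0 ≤ vol w S :=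
  sum_nonneg fun _ _ => sum_nonneg fun _ _ => hnonneg _ _

variable [DecidableEq V]

lemma vol_add_vol_sdiff (hSB : S ⊆ B) : vol w S + vol w (B \ S) = vol w B := by
  rw [vol, vol, add_comm, sum_sdiff hSB, vol]

lemma phi_nonneg (hnonneg : ∀ u v, 0 ≤ w u v) (S : Finset V) : 0 ≤ phi w S :=
  div_nonneg (eW_nonneg hnonneg _ _) (vol_nonneg hnonneg S)

lemma le_phi_iff (hS : 0 < vol w S) {r : ℝ} :
    r ≤ phi w S ↔ r * vol w S ≤ eW w S univ :=
  le_div_iff₀ hS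

lemma phi_mul_vol (hS : vol w S ≠ 0) : phi w S * vol w S = eW w S univ :=
  div_mul_cancel₀ _ hS

lemma exists_rho_le_phi (hnonneg : ∀ u v, 0 ≤ w u v) {k : ℕ} [NeZero k] {A : Fin k → Finset V}
    (hne : ∀ i, (A i).Nonempty) (hdisj : Pairwise (Disjoint on A)) :
    ∃ i, rho w k ≤ phi w (A i) := by
  obtain ⟨i, hi⟩ := exists_eq_ciSup_of_finite (f := fun i => phi w (A i))
  refine ⟨i, hi ▸ csInf_le ⟨0, ?_⟩ ⟨A, hne, fun _ _ h => hdisj h, rfl⟩⟩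
  rintro _ ⟨A', -, -, rfl⟩
  exact Real.iSup_nonneg fun i => phi_nonneg hnonneg (A' i)

lemma rho_succ_le_phi_or_of_disjoint (hnonneg : ∀ u v, 0 ≤ w u v) {k : ℕ}
    {A : Fin k → Finset V} (hne : ∀ i, (A i).Nonempty) (hdisj : Pairwise (Disjoint on A))
    {i : Fin k} {S T : Finset V} (hS : S.Nonempty) (hT : T.Nonempty) (hSA : S ⊆ A i)
    (hTA : T ⊆ A i) (hST : Disjoint S T) :
    rho w (k + 1) ≤ phi w S ∨ rho w (k + 1) ≤ phi w T ∨
      ∃ j ≠ i, rho w (k + 1) ≤ phi w (A j) := by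
  have hne' : ∀ j, (Fin.cons S (update A i T) : Fin (k + 1) → Finset V) j |>.Nonempty :=
    Fin.forall_fin_succ.2 ⟨hS, (forall_update_iff A fun _ R => R.Nonempty).2
      ⟨hT, fun j _ => hne j⟩⟩
  have hmax := exists_rho_le_phi hnonneg hne'
    (pairwise_disjoint_cons_update_of_le hdisj hSA hTA hST)
  rw [Fin.exists_fin_succ] at hmax
  exact hmax.imp_right (exists_update_iff A fun _ R => rho w (k + 1) ≤ phi w R).1

lemma one_add_mul_phi_le_or_of_disjoint (hnonneg : ∀ u v, 0 ≤ w u v) {k : ℕ} {ε : ℝ}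
    (hε : 0 < ε) {A : Fin k → Finset V} (hne : ∀ i, (A i).Nonempty)
    (hdisj : Pairwise (Disjoint on A)) (hA : ∀ i, (1 + ε) * phi w (A i) ≤ rho w (k + 1))
    {i : Fin k} {S T : Finset V} (hS : S.Nonempty) (hT : T.Nonempty) (hSA : S ⊆ A i)
    (hTA : T ⊆ A i) (hST : Disjoint S T) :
    (1 + ε) * phi w (A i) ≤ phi w S ∨ (1 + ε) * phi w (A i) ≤ phi w T := by
  obtain h | h | ⟨j, -, hj⟩ :=
    rho_succ_le_phi_or_of_disjoint hnonneg hne hdisj hS hT hSA hTA hST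
  · exact .inl ((hA i).trans h)
  · exact .inr ((hA i).trans h)
  · have hzero : phi w (A j) ≤ 0 := by
      have hgap : (1 + ε) * phi w (A j) ≤ phi w (A j) := (hA j).trans hj
      exact nonpos_of_mul_nonpos_right (by linarith) hε
    exact .inl ((hA i).trans (hj.trans (hzero.trans (phi_nonneg hnonneg S))))

lemma mul_vol_sdiff_mul_eW_le_of_phi_gap (hsym : ∀ u v, w u v = w v u)
    (hnonneg : ∀ u v, 0 ≤ w u v) {ε : ℝ} (hε : 0 ≤ ε) (hSB : S ⊆ B) (hS : 0 < vol w S)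
    (hT : 0 < vol w (B \ S)) (hle : phi w B ≤ phi w S) (hle' : phi w B ≤ phi w (B \ S))
    (hgap : (1 + ε) * phi w B ≤ phi w S ∨ (1 + ε) * phi w B ≤ phi w (B \ S)) :
    ε / (2 + ε) * vol w (B \ S) * eW w S (univ \ B) ≤ eW w S B * vol w B := by
  have hcutS := eW_add_eW_sdiff_right (w := w) (S := S) (subset_univ B)
  have hcutT : eW w S B + eW w (B \ S) (univ \ B) = eW w (B \ S) univ := by
    rw [← eW_sdiff_self hsym hSB, eW_add_eW_sdiff_right (subset_univ B)]
  have hB : vol w B ≠ 0 := by rw [← vol_add_vol_sdiff hSB]; positivity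
  have hcutB : phi w B * (vol w S + vol w (B \ S)) =
      eW w S (univ \ B) + eW w (B \ S) (univ \ B) := by
    rw [vol_add_vol_sdiff hSB, phi_mul_vol hB, eW_add_eW_sdiff_left hSB]
  rw [le_phi_iff hS, ← hcutS] at hle
  rw [le_phi_iff hT, ← hcutT] at hle'
  rw [le_phi_iff hS, le_phi_iff hT, ← hcutS, ← hcutT] at hgap
  have hbound := mul_mul_le_mul_of_boundary_gap (eW_nonneg hnonneg _ _) (eW_nonneg hnonneg _ _)
    hS.le hT.le hε hcutB hle hle' hgap
  rw [vol_add_vol_sdiff hSB] at hbound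
  rw [div_mul_eq_mul_div, div_mul_eq_mul_div, div_le_iff₀ (by linarith)]
  linarith

end Conductance

theorem stmt5_general {V : Type*} [Fintype V] [DecidableEq V] {w : V → V → ℝ}
    (hsym : ∀ u v, w u v = w v u) (hnonneg : ∀ u v, 0 ≤ w u v) (hdeg : ∀ v, 0 < deg w v)
    {k : ℕ} {ε : ℝ} (hε : 0 < ε) {A : Fin k → Finset V} (hne : ∀ i, (A i).Nonempty)
    (hdisj : Pairwise (Disjoint on A)) (hA : ∀ i, (1 + ε) * phi w (A i) ≤ rho w (k + 1))
    (i : Fin k) :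
    ∃ B : Finset V, B.Nonempty ∧ B ⊆ A i ∧ phi w B ≤ phi w (A i) ∧
      ∀ S : Finset V, S ⊆ B → S.Nonempty → S ≠ B →
        ε / (2 + ε) * vol w (B \ S) * eW w S (univ \ B) ≤ eW w S B * vol w B := by
  obtain ⟨B, ⟨hB, hBA⟩, hmin⟩ := Set.exists_min_image {B : Finset V | B.Nonempty ∧ B ⊆ A i}
    (phi w) (Set.toFinite _) ⟨A i, hne i, Subset.rfl⟩
  have hBle : phi w B ≤ phi w (A i) := hmin _ ⟨hne i, Subset.rfl⟩
  refine ⟨B, hB, hBA, hBle, fun S hSB hS hSne => ?_⟩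
  have hT : (B \ S).Nonempty := sdiff_nonempty.2 fun h => hSne (hSB.antisymm h)
  have hSA : S ⊆ A i := hSB.trans hBA
  have hTA : B \ S ⊆ A i := sdiff_subset.trans hBA
  have hgapB : (1 + ε) * phi w B ≤ (1 + ε) * phi w (A i) := by gcongr
  have hgap := one_add_mul_phi_le_or_of_disjoint hnonneg hε hne hdisj hA hS hT hSA hTA
    disjoint_sdiff
  exact mul_vol_sdiff_mul_eW_le_of_phi_gap hsym hnonneg hε.le hSB (vol_pos hdeg hS)
    (vol_pos hdeg hT) (hmin S ⟨hS, hSA⟩) (hmin _ ⟨hT, hTA⟩) (hgap.imp hgapB.trans hgapB.trans)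

theorem stmt5 {V : Type*} [Fintype V] [DecidableEq V] (w : V → V → ℝ)
    (hsym : ∀ u v, w u v = w v u) (hnonneg : ∀ u v, 0 ≤ w u v)
    (hdeg : ∀ v, 0 < deg w v) (k : ℕ) (hk : 1 ≤ k)
    (hcard : k + 1 ≤ Fintype.card V)
    (ε : ℝ) (hε0 : 0 < ε) (hε1 : ε < 1)
    (A : Fin k → Finset V) (hne : ∀ i, (A i).Nonempty)
    (hdisj : ∀ i j, i ≠ j → Disjoint (A i) (A j))
    (hA : ∀ i, (1 + ε) * phi w (A i) ≤ rho w (k + 1)) :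
    ∀ i, ∃ B : Finset V, B.Nonempty ∧ B ⊆ A i ∧
      phi w B ≤ phi w (A i) ∧
      ∀ S : Finset V, S ⊆ B → S.Nonempty → S ≠ B →
        ε / 3 * vol w (B \ S) * eW w S (Finset.univ \ B) ≤ eW w S B * vol w B := by
  intro i
  obtain ⟨B, hB, hBA, hBle, hcut⟩ :=
    stmt5_general hsym hnonneg hdeg hε0 hne (fun i j h => hdisj i j h) hA i
  refine ⟨B, hB, hBA, hBle, fun S hSB hS hSne => le_trans ?_ (hcut S hSB hS hSne)⟩
  have hvol : 0 ≤ vol w (B \ S) := vol_nonneg hnonneg _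
  have hout : 0 ≤ eW w S (univ \ B) := eW_nonneg hnonneg _ _
  gcongr
  linarith
end

section
/- Let G=(V,E) be a finite weighted graph, k ≥ 1 an integer, and B_1,…,B_k pairwise disjoint nonempty subsets of V. Then there exists a partition of V into sets P_1,…,P_k such that B_i ⊆ P_i for every i, and for every 1 ≤ i ≤ k and every subset S ⊆ P_i∖B_i, e(S, P_i) ≥ e(S, V)/k. -/
open Finset

/-!
Among the colourings of `V` that give every vertex of `B i` the colour `i`, take one that maximizes
the weight of the monochromatic edges, and let `P i` be its `i`-th colour class. Recolouring a set
`S ⊆ P i \ B i` with `j` loses the edges from `S` to `P i` and gains those from `S` to `P j`, so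
maximality gives `e(S, P j) ≤ e(S, P i)`. Since `e(S, V)` is the sum of `e(S, P j)` over the `k`
colours `j`, it is at most `k * e(S, P i)`.
-/

/-- The weight of the monochromatic edges of the colouring `c`, the quantity maximized to obtain the
partition. The sum is over ordered pairs, so every edge between distinct vertices counts twice. -/
noncomputable def monochromaticWeight {V ι : Type*} [Fintype V] [DecidableEq ι] (w : V → V → ℝ)
    (c : V → ι) : ℝ :=
  ∑ u, ∑ v, if c u = c v then w u v else 0

section ColorClasses

variable {V ι : Type*} [DecidableEq V] [DecidableEq ι] (w : V → V → ℝ) (c : V → ι) (S : Finset V)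

theorem eW_eq_sum_ite [Fintype V] (T : Finset V) :
    eW w S T = ∑ u, ∑ v, if u ∈ S ∧ v ∈ T \ S then w u v else 0 := by
  simp only [eW, ite_and, sum_ite_irrel, sum_ite_mem, univ_inter, sum_const_zero]

theorem sum_eW_fiberwise [Fintype ι] (T : Finset V) :
    ∑ i, eW w S {v ∈ T | c v = i} = eW w S T := by
  simp only [eW]
  rw [sum_comm]
  refine sum_congr rfl fun u _ => ?_
  rw [← sum_fiberwise (T \ S) c]
  simp only [sdiff_eq_filter, filter_filter, and_comm]

variable {w c S} [Fintype V]

theorem monochromaticWeight_piecewise_const (hw : ∀ u v, w u v = w v u) {i : ι}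
    (hS : ∀ u ∈ S, c u = i) (j : ι) :
    monochromaticWeight w (S.piecewise (fun _ => j) c) + 2 * eW w S {v | c v = i} =
      monochromaticWeight w c + 2 * eW w S {v | c v = j} := by
  let a (l : ι) (u v : V) : ℝ := if u ∈ S ∧ v ∈ ({v | c v = l} : Finset V) \ S then w u v else 0
  have two_mul_eW (l : ι) : 2 * eW w S {v | c v = l} = ∑ u, ∑ v, (a l u v + a l v u) := by
    simp only [sum_add_distrib]
    rw [sum_comm (f := fun u v => a l v u), ← two_mul, eW_eq_sum_ite]
  have pair_balance (u v : V) :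
      (if S.piecewise (fun _ => j) c u = S.piecewise (fun _ => j) c v then w u v else 0) +
          (a i u v + a i v u) =
        (if c u = c v then w u v else 0) + (a j u v + a j v u) := by
    by_cases hu : u ∈ S <;> by_cases hv : v ∈ S
    · simp [a, hu, hv, hS u hu, hS v hv]
    · simp [a, hu, hv, hS u hu, eq_comm, add_comm]
    · simp [a, hu, hv, hS v hv, hw v u, add_comm]
    · simp [a, hu, hv]
  simp only [two_mul_eW, monochromaticWeight, ← sum_add_distrib, pair_balance]

theorem monochromaticWeight_piecewise_const_le_iff (hw : ∀ u v, w u v = w v u) {i : ι}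
    (hS : ∀ u ∈ S, c u = i) (j : ι) :
    monochromaticWeight w (S.piecewise (fun _ => j) c) ≤ monochromaticWeight w c ↔
      eW w S {v | c v = j} ≤ eW w S {v | c v = i} := by
  have balance := monochromaticWeight_piecewise_const hw hS j
  constructor <;> intro h <;> linarith

end ColorClasses

theorem exists_forall_mem_eq_of_disjoint {α ι : Type*} [Nonempty ι] {B : ι → Set α}
    (hB : Pairwise fun i j => Disjoint (B i) (B j)) :
    ∃ c : α → ι, ∀ i, ∀ v ∈ B i, c v = i := by
  refine ⟨fun v => Classical.epsilon fun i => v ∈ B i, fun i v hv => hB.eq fun hdisj => ?_⟩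
  exact Set.disjoint_left.mp hdisj (Classical.epsilon_spec (p := fun i => v ∈ B i) ⟨i, hv⟩) hv

theorem exists_coloring_eW_le_eW {V ι : Type*} [Fintype V] [DecidableEq V] [Finite ι]
    [Nonempty ι] [DecidableEq ι] {w : V → V → ℝ} (hw : ∀ u v, w u v = w v u) {B : ι → Finset V}
    (hB : ∀ i j, i ≠ j → Disjoint (B i) (B j)) :
    ∃ c : V → ι, (∀ i, ∀ v ∈ B i, c v = i) ∧
      ∀ i, ∀ S ⊆ ({v | c v = i} : Finset V) \ B i, ∀ j,
        eW w S {v | c v = j} ≤ eW w S {v | c v = i} := by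
  let extensions : Set (V → ι) := {c | ∀ i, ∀ v ∈ B i, c v = i}
  have extensions_nonempty : extensions.Nonempty :=
    exists_forall_mem_eq_of_disjoint (B := fun i => (B i : Set V)) fun i j hij =>
      disjoint_coe.mpr (hB i j hij)
  obtain ⟨c, hc, c_max⟩ :=
    Set.exists_max_image extensions (monochromaticWeight w) extensions.toFinite extensions_nonempty
  refine ⟨c, hc, fun i S hS j => ?_⟩
  have hSi : ∀ u ∈ S, c u = i ∧ u ∉ B i := fun u hu => by simpa using hS hu
  refine (monochromaticWeight_piecewise_const_le_iff hw (fun u hu => (hSi u hu).1) j).mp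
    (c_max _ fun l v hv => ?_)
  have v_notMem : v ∉ S := fun hvS => by
    obtain ⟨hvi, hvB⟩ := hSi v hvS
    obtain rfl : l = i := (hc l v hv).symm.trans hvi
    exact hvB hv
  rw [piecewise_eq_of_notMem _ _ _ v_notMem, hc l v hv]

theorem stmt12_general {V ι : Type*} [Fintype V] [DecidableEq V] [Fintype ι] [Nonempty ι]
    (w : V → V → ℝ) (hsym : ∀ u v, w u v = w v u) (B : ι → Finset V)
    (hdisj : ∀ i j, i ≠ j → Disjoint (B i) (B j)) :
    ∃ P : ι → Finset V,
      (∀ i j, i ≠ j → Disjoint (P i) (P j)) ∧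
      (∀ v : V, ∃ i, v ∈ P i) ∧
      (∀ i, B i ⊆ P i) ∧
      (∀ i, ∀ S : Finset V, S ⊆ P i \ B i →
        eW w S Finset.univ / (Fintype.card ι : ℝ) ≤ eW w S (P i)) := by
  classical
  obtain ⟨c, hc, c_max⟩ := exists_coloring_eW_le_eW hsym hdisj
  refine ⟨fun i => {v | c v = i}, fun i j hij => ?_, fun v => ⟨c v, by simp⟩,
    fun i v hv => by simpa using hc i v hv, fun i S hS => ?_⟩
  · exact disjoint_filter.mpr fun v _ hvi hvj => hij (hvi.symm.trans hvj)
  · rw [div_le_iff₀' (by positivity)]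
    calc eW w S univ = ∑ j, eW w S {v | c v = j} := (sum_eW_fiberwise w c S univ).symm
      _ ≤ ∑ _j : ι, eW w S {v | c v = i} := sum_le_sum fun j _ => c_max i S hS j
      _ = Fintype.card ι * eW w S {v | c v = i} := by
        rw [sum_const, card_univ, nsmul_eq_mul]

theorem stmt12 {V : Type*} [Fintype V] [DecidableEq V] (w : V → V → ℝ)
    (hsym : ∀ u v, w u v = w v u) (hnonneg : ∀ u v, 0 ≤ w u v)
    (hdeg : ∀ v, 0 < deg w v)
    (k : ℕ) (hk : 1 ≤ k) (B : Fin k → Finset V)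
    (hne : ∀ i, (B i).Nonempty) (hdisj : ∀ i j, i ≠ j → Disjoint (B i) (B j)) :
    ∃ P : Fin k → Finset V,
      (∀ i j, i ≠ j → Disjoint (P i) (P j)) ∧
      (∀ v : V, ∃ i, v ∈ P i) ∧
      (∀ i, B i ⊆ P i) ∧
      (∀ i, ∀ S : Finset V, S ⊆ P i \ B i →
        eW w S Finset.univ / (k : ℝ) ≤ eW w S (P i)) := by
  have : Nonempty (Fin k) := ⟨⟨0, hk⟩⟩
  simpa only [Fintype.card_fin] using stmt12_general w hsym B hdisj
end
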